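/- arXiv:2311.06428 — 2 statements merged into one kernel-verified Lean document; each statement's English description precedes it below -/
import Mathlib

section
/- Let H ⊆ Y^X where |Y| = k < ∞. If the multiclass Littlestone dimension of H is infinite, then the multiclass threshold dimension of H is infinite. Quantitatively, if LD(H) ≥ d then MTD(H) ≥ f_k(d) where f_k(1) = 1 and f_k(d) ≥ 1 + f_k(⌈d/(2k)⌉ - 1), and f_k(d) → ∞ as d → ∞. -/
/-- `H ⊆ Y^X` shatters some multiclass Littlestone tree of depth `d`: nodes are indexed by
binary strings of length `< d` and carry points of `X`, the two out-edges of each node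
carry distinct labels of `Y`, and every root-to-leaf path is realized by some `h ∈ H`. -/
def mLDge {X Y : Type*} (H : Set (X → Y)) (d : ℕ) : Prop :=
  ∃ (x : List Bool → X) (y : List Bool → Y),
    (∀ u : List Bool, u.length < d → y (u ++ [false]) ≠ y (u ++ [true])) ∧
    ∀ σ : List Bool, σ.length = d →
      ∃ h ∈ H, ∀ i : ℕ, i < σ.length → h (x (σ.take i)) = y (σ.take (i + 1))

/-- The multiclass threshold dimension of `H` is at least `t`: there are points
`x_1,…,x_t`, labels `y_i, y'_j` with `y_i ≠ y'_j` for all `i,j`, and hypotheses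
`h_1,…,h_t ∈ H` with `h_i(x_j) = y_i` for `j ≤ i` and `h_i(x_j) = y'_j` for `j > i`. -/
def MTDge {X Y : Type*} (H : Set (X → Y)) (t : ℕ) : Prop :=
  ∃ (x : Fin t → X) (y y' : Fin t → Y) (h : Fin t → X → Y),
    (∀ i j, y i ≠ y' j) ∧ (∀ i, h i ∈ H) ∧
    ∀ i j, h i (x j) = if j ≤ i then y i else y' j

/-- `H` shatters a tree of depth `n` all of whose nodes, a point together with its two distinct
labels, satisfy `P`. -/
def Shatters {X Y : Type*} (P : X → Y → Y → Prop) : ℕ → Set (X → Y) → Prop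
  | 0, H => H.Nonempty
  | n + 1, H => ∃ x a b, a ≠ b ∧ P x a b ∧
      Shatters P n {g ∈ H | g x = a} ∧ Shatters P n {g ∈ H | g x = b}

/-- The data `x, y, y', f` form a threshold of size `n` in `H`, with points satisfying `D` and
labels `y'` satisfying `R`. -/
structure IsThreshold {X Y : Type*} (D : X → Prop) (R : Y → Prop) (H : Set (X → Y)) {n : ℕ}
    (x : Fin n → X) (y y' : Fin n → Y) (f : Fin n → X → Y) : Prop where
  point : ∀ i, D (x i)
  label : ∀ i, R (y' i)
  ne : ∀ i j, y i ≠ y' j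
  mem : ∀ i, f i ∈ H
  eval : ∀ i j, f i (x j) = if j ≤ i then y i else y' j

/-- `H` has a threshold of size `n` with points in `D` and upper labels in `R`. -/
def HasThreshold {X Y : Type*} (D : X → Prop) (R : Y → Prop) (H : Set (X → Y)) (n : ℕ) : Prop :=
  ∃ (x : Fin n → X) (y y' : Fin n → Y) (f : Fin n → X → Y), IsThreshold D R H x y y' f

section Trees

variable {X Y : Type*} {P P' : X → Y → Y → Prop} {H : Set (X → Y)}

theorem Shatters.mono (hP : ∀ x a b, P x a b → P' x a b) :
    ∀ {n : ℕ} {H H' : Set (X → Y)}, H ⊆ H' → Shatters P n H → Shatters P' n H'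
  | 0, _, _, hH, h => Set.Nonempty.mono hH h
  | _ + 1, _, _, hH, ⟨x, a, b, hab, hx, ha, hb⟩ =>
    ⟨x, a, b, hab, hP _ _ _ hx, Shatters.mono hP (fun _ hg => ⟨hH hg.1, hg.2⟩) ha,
      Shatters.mono hP (fun _ hg => ⟨hH hg.1, hg.2⟩) hb⟩

theorem Shatters.nonempty : ∀ {n : ℕ} {H : Set (X → Y)}, Shatters P n H → H.Nonempty
  | 0, _, h => h
  | _ + 1, _, ⟨_, _, _, _, _, ha, _⟩ => ha.nonempty.mono fun _ hg => hg.1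

theorem Shatters.of_le {n m : ℕ} (hnm : m ≤ n) (h : Shatters P n H) : Shatters P m H := by
  induction n generalizing m H with
  | zero => obtain rfl : m = 0 := by omega
            exact h
  | succ n ih =>
    cases m with
    | zero => exact h.nonempty
    | succ m =>
      obtain ⟨x, a, b, hab, hx, ha, hb⟩ := h
      exact ⟨x, a, b, hab, hx, ih (by omega) ha, ih (by omega) hb⟩

/-- The Ramsey lemma for trees, for a colouring of the nodes with two colours. -/
theorem Shatters.split (Q : X → Y → Y → Prop) {N m n : ℕ} (hN : m + n ≤ N + 1)
    (h : Shatters P N H) :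
    Shatters (fun x a b => P x a b ∧ Q x a b) m H ∨
      Shatters (fun x a b => P x a b ∧ ¬ Q x a b) n H := by
  induction N generalizing m n H with
  | zero =>
    obtain rfl | rfl : m = 0 ∨ n = 0 := by omega
    · exact Or.inl h
    · exact Or.inr h
  | succ N ih =>
    rcases m with _ | m
    · exact Or.inl h.nonempty
    rcases n with _ | n
    · exact Or.inr h.nonempty
    obtain ⟨x, a, b, hab, hx, ha, hb⟩ := h
    by_cases hQ : Q x a b
    · rcases ih (m := m) (n := n + 1) (by omega) ha with h1 | h1
      · rcases ih (m := m) (n := n + 1) (by omega) hb with h2 | h2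
        · exact Or.inl ⟨x, a, b, hab, ⟨hx, hQ⟩, h1, h2⟩
        · exact Or.inr (h2.mono (fun _ _ _ => id) fun _ hg => hg.1)
      · exact Or.inr (h1.mono (fun _ _ _ => id) fun _ hg => hg.1)
    · rcases ih (m := m + 1) (n := n) (by omega) ha with h1 | h1
      · exact Or.inl (h1.mono (fun _ _ _ => id) fun _ hg => hg.1)
      · rcases ih (m := m + 1) (n := n) (by omega) hb with h2 | h2
        · exact Or.inl (h2.mono (fun _ _ _ => id) fun _ hg => hg.1)
        · exact Or.inr ⟨x, a, b, hab, ⟨hx, hQ⟩, h1, h2⟩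

/-- A tree either has a deep subtree of one of the colours in `s`, or a deep subtree avoiding all
of them. -/
theorem Shatters.split_finset {ι : Type*} (s : Finset ι) (Q : ι → X → Y → Y → Prop) (E : ι → ℕ)
    {n : ℕ} (h : Shatters P (∑ i ∈ s, E i + n) H) :
    (∃ i ∈ s, Shatters (fun x a b => P x a b ∧ Q i x a b) (E i + 1) H) ∨
      Shatters (fun x a b => P x a b ∧ ∀ i ∈ s, ¬ Q i x a b) n H := by
  classical
  induction s using Finset.induction_on generalizing P with
  | empty => exact Or.inr (h.mono (by simp) subset_rfl |>.of_le (by simp))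
  | insert i s hi ih =>
    rw [Finset.sum_insert hi] at h
    rcases h.split (Q i) (m := E i + 1) (n := ∑ i ∈ s, E i + n) (by omega) with h1 | h1
    · exact Or.inl ⟨i, by simp, h1⟩
    · rcases ih h1 with ⟨j, hj, h2⟩ | h2
      · exact Or.inl ⟨j, by simp [hj], h2.mono (fun _ _ _ h => ⟨h.1.1, h.2⟩) subset_rfl⟩
      · refine Or.inr (h2.mono (fun x a b hx => ⟨hx.1.1, fun j hj => ?_⟩) subset_rfl)
        rcases Finset.mem_insert.1 hj with rfl | hj
        · exact hx.1.2
        · exact hx.2 j hj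

theorem Shatters.exists_color {ι : Type*} (s : Finset ι) (Q : ι → X → Y → Y → Prop) (E : ι → ℕ)
    (hQ : ∀ x a b, a ≠ b → P x a b → ∃ i ∈ s, Q i x a b)
    (h : Shatters P (∑ i ∈ s, E i + 1) H) :
    ∃ i ∈ s, Shatters (fun x a b => P x a b ∧ Q i x a b) (E i + 1) H := by
  rcases h.split_finset s Q E with h1 | ⟨x, a, b, hab, ⟨hx, h1⟩, _⟩
  · exact h1
  · obtain ⟨i, hi, hi'⟩ := hQ x a b hab hx
    exact absurd hi' (h1 i hi)

/-- Descending to a child of the root with a prescribed label. -/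
theorem Shatters.commit {n : ℕ} {r : Y} (hr : ∀ x a b, P x a b → a = r ∨ b = r)
    (h : Shatters P (n + 1) H) :
    ∃ x a b, P x a b ∧ Shatters P n {g ∈ H | g x = r} := by
  obtain ⟨x, a, b, _, hx, ha, hb⟩ := h
  rcases hr x a b hx with rfl | rfl
  · exact ⟨x, a, b, hx, ha⟩
  · exact ⟨x, a, b, hx, hb⟩

end Trees

section Thresholds

variable {X Y : Type*} {D D' : X → Prop} {R R' : Y → Prop} {H H' : Set (X → Y)} {n : ℕ}

theorem IsThreshold.mono {x : Fin n → X} {y y' : Fin n → Y} {f : Fin n → X → Y}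
    (h : IsThreshold D R H x y y' f) (hD : ∀ x, D x → D' x) (hR : ∀ y, R y → R' y)
    (hH : H ⊆ H') : IsThreshold D' R' H' x y y' f :=
  ⟨fun i => hD _ (h.point i), fun i => hR _ (h.label i), h.ne, fun i => hH (h.mem i), h.eval⟩

theorem HasThreshold.mono (h : HasThreshold D R H n) (hD : ∀ x, D x → D' x)
    (hR : ∀ y, R y → R' y) (hH : H ⊆ H') : HasThreshold D' R' H' n := by
  obtain ⟨x, y, y', f, h⟩ := h
  exact ⟨x, y, y', f, h.mono hD hR hH⟩

/-- Adding a new largest element to a threshold. -/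
theorem IsThreshold.snoc {x : Fin n → X} {y y' : Fin n → Y} {f : Fin n → X → Y} {x₀ : X}
    {b c : Y} {h : X → Y} (ht : IsThreshold (fun x => D x ∧ h x = c) R H' x y y' f)
    (hH : H' ⊆ H) (hh : h ∈ H) (hx₀ : D x₀) (hc : h x₀ = c) (hb : ∀ g ∈ H', g x₀ = b)
    (hbc : c ≠ b) (hby : ∀ i, y i ≠ b) (hcR : ¬ R c) :
    IsThreshold D (fun z => R z ∨ z = b) H (Fin.snoc x x₀ : Fin (n + 1) → X)
      (Fin.snoc y c : Fin (n + 1) → Y) (Fin.snoc y' b : Fin (n + 1) → Y)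
      (Fin.snoc f h : Fin (n + 1) → X → Y) where
  point i := by
    induction i using Fin.lastCases with
    | last => simpa using hx₀
    | cast i => simpa using (ht.point i).1
  label i := by
    induction i using Fin.lastCases with
    | last => simp
    | cast i => simpa using Or.inl (ht.label i)
  ne i j := by
    induction i using Fin.lastCases with
    | last =>
      induction j using Fin.lastCases with
      | last => simpa using hbc
      | cast j => simpa using fun h' : c = y' j => hcR (h' ▸ ht.label j)
    | cast i =>
      induction j using Fin.lastCases with
      | last => simpa using hby i
      | cast j => simpa using ht.ne i j
  mem i := by
    induction i using Fin.lastCases with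
    | last => simpa using hh
    | cast i => simpa using hH (ht.mem i)
  eval i j := by
    induction i using Fin.lastCases with
    | last =>
      induction j using Fin.lastCases with
      | last => simpa using hc
      | cast j => simpa [Fin.le_last] using (ht.point j).2
    | cast i =>
      induction j using Fin.lastCases with
      | last => simpa [Fin.last_le_iff, Fin.castSucc_ne_last] using hb _ (ht.mem i)
      | cast j => simpa using ht.eval i j

/-- Extending a threshold whose upper labels are all equal to `b`. -/
theorem HasThreshold.snoc_const {x₀ : X} {b c : Y} {h : X → Y} (hn : 0 < n)
    (ht : HasThreshold (fun x => D x ∧ h x = c) (· = b) {g ∈ H | g x₀ = b} n)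
    (hh : h ∈ H) (hx₀ : D x₀) (hc : h x₀ = c) (hbc : c ≠ b) :
    HasThreshold D (· = b) H (n + 1) := by
  obtain ⟨x, y, y', f, ht⟩ := ht
  refine ⟨_, _, _, _, (ht.snoc (H := H) (fun _ hg => hg.1) hh hx₀ hc (fun _ hg => hg.2) hbc
    (fun i => ?_) hbc).mono (fun _ => id) (by simp) subset_rfl⟩
  rw [← ht.label ⟨0, hn⟩]
  exact ht.ne _ _

theorem isThreshold_one {x : X} {a b : Y} {g : X → Y} (hx : D x) (hb : R b) (hab : a ≠ b)
    (hg : g ∈ H) (hgx : g x = a) :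
    IsThreshold D R H (fun _ : Fin 1 => x) (fun _ => a) (fun _ => b) (fun _ => g) :=
  ⟨fun _ => hx, fun _ => hb, fun _ _ => hab, fun _ => hg, fun i j => by
    simp [Subsingleton.elim i j, hgx]⟩

end Thresholds

section PairGame

variable {X Y : Type*}

theorem isThreshold_two {D : X → Prop} {R : Y → Prop} {H : Set (X → Y)} {x₁ x₂ : X} {c r : Y}
    {g₁ g₂ : X → Y} (hx₁ : D x₁) (hx₂ : D x₂) (hr : R r) (hcr : c ≠ r) (hg₁ : g₁ ∈ H)
    (hg₂ : g₂ ∈ H) (h₁₁ : g₁ x₁ = c) (h₁₂ : g₁ x₂ = r) (h₂₁ : g₂ x₁ = c) (h₂₂ : g₂ x₂ = c) :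
    IsThreshold D R H ![x₁, x₂] (fun _ => c) (fun _ => r) ![g₁, g₂] where
  point i := by fin_cases i <;> assumption
  label _ := hr
  ne _ _ := hcr
  mem i := by fin_cases i <;> assumption
  eval i j := by fin_cases i <;> fin_cases j <;> simp [*]

/-- A tree of depth two all of whose nodes have the label `c` contains a threshold of size two. -/
theorem Shatters.isThreshold_two {D : X → Prop} {R : Y → Prop} {P : X → Y → Y → Prop}
    {H : Set (X → Y)} {c : Y}
    (hP : ∀ x p q, P x p q → D x ∧ R p ∧ R q ∧ (p = c ∨ q = c)) (h : Shatters P 2 H) :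
    ∃ (x : Fin 2 → X) (r : Y) (f : Fin 2 → X → Y),
      IsThreshold D (fun z => R z ∧ z ≠ c) H x (fun _ => c) (fun _ => r) f := by
  obtain ⟨x₁, _, _, hx₁, x₂, p, q, hpq, hx₂, ⟨g, ⟨hg, hg₁⟩, hg₂⟩, ⟨k, ⟨hk, hk₁⟩, hk₂⟩⟩ :=
    h.commit (r := c) fun x p q hx => (hP x p q hx).2.2.2
  obtain ⟨hD₂, hp, hq, rfl | rfl⟩ := hP _ _ _ hx₂
  · have hq' : R q ∧ q ≠ p := ⟨hq, hpq.symm⟩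
    exact ⟨_, q, _, _root_.isThreshold_two (hP _ _ _ hx₁).1 hD₂ hq' hpq hk hg hk₁ hk₂ hg₁ hg₂⟩
  · have hp' : R p ∧ p ≠ q := ⟨hp, hpq⟩
    exact ⟨_, p, _, _root_.isThreshold_two (hP _ _ _ hx₁).1 hD₂ hp' hpq.symm hg hk hg₁ hg₂ hk₁ hk₂⟩

/-- Every tree of depth greater than `E` with all nodes labelled `a, b` contains a threshold of
size `u` with upper label `b`, or one of size `v` with upper label `a`. -/
def PairWins (X Y : Type*) (u v E : ℕ) : Prop :=
  ∀ (D : X → Prop) (P : X → Y → Y → Prop) (H : Set (X → Y)) (a b : Y), a ≠ b →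
    (∀ x p q, P x p q → D x ∧ (p = a ∨ q = a) ∧ (p = b ∨ q = b)) → Shatters P (E + 1) H →
      HasThreshold D (· = b) H u ∨ HasThreshold D (· = a) H v

theorem PairWins.symm {u v E : ℕ} (h : PairWins X Y u v E) : PairWins X Y v u E :=
  fun D P H a b hab hP hS =>
    (h D P H b a hab.symm (fun x p q hx => ⟨(hP x p q hx).1, (hP x p q hx).2.symm⟩) hS).symm

theorem pairWins_two_left (v : ℕ) : PairWins X Y 2 v 1 := by
  intro D P H a b hab hP hS
  obtain ⟨x, r, f, h⟩ := hS.isThreshold_two (D := D) (R := fun z => z = a ∨ z = b) (c := a)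
    fun x p q hx => by
      have := hP x p q hx
      grind
  exact Or.inl ⟨x, _, _, f, h.mono (fun _ => id) (by grind) subset_rfl⟩

/-- The situation of `PairWins`, in the presence of a hypothesis `h ∈ H` which is constant, with a
value different from both `a` and `b`, on all nodes. -/
def ConstWins (X Y : Type*) (u v E : ℕ) : Prop :=
  ∀ (D : X → Prop) (P : X → Y → Y → Prop) (H : Set (X → Y)) (a b c : Y) (h : X → Y),
    a ≠ b → h ∈ H → c ≠ a → c ≠ b →
    (∀ x p q, P x p q → (D x ∧ h x = c) ∧ (p = a ∨ q = a) ∧ (p = b ∨ q = b)) →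
    Shatters P (E + 1) H → HasThreshold D (· = b) H u ∨ HasThreshold D (· = a) H v

/-- Descending along one label, a threshold with that upper label can be extended. -/
theorem PairWins.extend_left {u v E : ℕ} (hu : 0 < u) (hw : PairWins X Y u v E) {D : X → Prop}
    {P : X → Y → Y → Prop} {H : Set (X → Y)} {a b c : Y} {h : X → Y} (hab : a ≠ b) (hh : h ∈ H)
    (hcb : c ≠ b)
    (hP : ∀ x p q, P x p q → (D x ∧ h x = c) ∧ (p = a ∨ q = a) ∧ (p = b ∨ q = b))
    (hS : Shatters P (E + 1 + 1) H) :
    HasThreshold D (· = b) H (u + 1) ∨ HasThreshold D (· = a) H v := by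
  obtain ⟨x, p, q, hx, hS⟩ := hS.commit (r := b) fun x p q hx => (hP x p q hx).2.2
  have hx := (hP x p q hx).1
  rcases hw _ _ _ a b hab hP hS with h1 | h1
  · exact Or.inl (h1.snoc_const hu hh hx.1 hx.2 hcb)
  · exact Or.inr (h1.mono (fun _ h => h.1) (fun _ => id) fun _ hg => hg.1)

theorem PairWins.constWins_left {u v E : ℕ} (hu : 0 < u) (hw : PairWins X Y u v E) :
    ConstWins X Y (u + 1) v (E + 1) :=
  fun _ _ _ _ _ _ _ hab hh _ hcb hP hS => hw.extend_left hu hab hh hcb hP hS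

theorem PairWins.constWins {u v E : ℕ} (hu : 0 < u) (hv : 0 < v) (hw : PairWins X Y u v E) :
    ConstWins X Y (u + 1) (v + 1) (E + 2) := by
  intro D P H a b c h hab hh hca hcb hP hS
  obtain ⟨x, p, q, hx, hS⟩ := hS.commit (r := b) fun x p q hx => (hP x p q hx).2.2
  obtain ⟨x', p', q', hx', hS⟩ := hS.commit (r := a) fun x p q hx => (hP x p q hx).2.1
  have hx := (hP x p q hx).1
  have hx' := (hP x' p' q' hx').1
  rcases hw _ _ _ a b hab hP hS with h1 | h1
  · exact Or.inl ((h1.mono (H' := {g ∈ H | g x = b}) (fun _ => id) (fun _ => id)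
      fun _ hg => hg.1).snoc_const hu hh hx.1 hx.2 hcb)
  · exact Or.inr ((h1.mono (H' := {g ∈ H | g x' = a}) (fun _ => id) (fun _ => id)
      fun _ hg => ⟨hg.1.1, hg.2⟩).snoc_const hv hh hx'.1 hx'.2 hca)

theorem pairWins_step [Fintype Y] {m u v E₁ E₂ E₃ : ℕ} (hm : Fintype.card Y = m + 2)
    (hu : 0 < u) (hv : 0 < v) (h₁ : PairWins X Y u (v + 1) E₁) (h₂ : PairWins X Y (u + 1) v E₂)
    (h₃ : ConstWins X Y (u + 1) (v + 1) E₃) :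
    PairWins X Y (u + 1) (v + 1) (E₁ + 1 + (E₂ + 1) + m * E₃) := by
  classical
  intro D P H a b hab hP hS
  obtain ⟨h, hh⟩ := hS.nonempty
  let E : Y → ℕ := fun c => if c = a then E₁ + 1 else if c = b then E₂ + 1 else E₃
  have hE : ∑ c, E c = E₁ + 1 + (E₂ + 1) + m * E₃ := by
    rw [← Finset.add_sum_erase _ _ (Finset.mem_univ a),
      ← Finset.add_sum_erase (Finset.univ.erase a) _ (a := b) (by simp [hab.symm]),
      Finset.sum_congr rfl (g := fun _ => E₃) (by
        intro c hc
        simp only [Finset.mem_erase, Finset.mem_univ, and_true] at hc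
        simp [E, hc])]
    simp [E, hab.symm, hm, add_assoc]
  rw [← hE] at hS
  obtain ⟨c, -, hS⟩ := hS.exists_color Finset.univ (fun c x _ _ => h x = c) E
    fun x _ _ _ _ => ⟨h x, by simp⟩
  have hPc : ∀ x p q, (P x p q ∧ h x = c) →
      (D x ∧ h x = c) ∧ (p = a ∨ q = a) ∧ (p = b ∨ q = b) := fun x p q hx =>
    ⟨⟨(hP x p q hx.1).1, hx.2⟩, (hP x p q hx.1).2⟩
  by_cases hca : c = a
  · simp only [E, hca, if_true] at hS
    subst hca
    exact h₁.extend_left hu hab hh hab hPc hS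
  by_cases hcb : c = b
  · simp only [E, hcb, hab.symm, if_true, if_false] at hS
    subst hcb
    exact (h₂.symm.extend_left hv hab.symm hh hab.symm
      (fun x p q hx => ⟨(hPc x p q hx).1, (hPc x p q hx).2.symm⟩) hS).symm
  · simp only [E, hca, hcb, if_false] at hS
    exact h₃ _ _ _ _ _ _ _ hab hh hca hcb hPc hS

/-- The bound obtained by iterating `pairWins_step`, for `m + 2` labels. -/
def pairBound (m : ℕ) : ℕ → ℕ → ℕ
  | 0, _ => 1
  | _ + 1, 0 => 1
  | 1, j + 1 => 1 + (2 * m + 3) * (j + 1)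
  | i + 2, 1 => 1 + (2 * m + 3) * (i + 2)
  | i + 2, j + 2 => pairBound m (i + 1) (j + 2) + 1 + (pairBound m (i + 2) (j + 1) + 1) +
      m * (pairBound m (i + 1) (j + 1) + 2)

theorem pairBound_comm (m i j : ℕ) : pairBound m i j = pairBound m j i := by
  fun_induction pairBound m i j with
  | case1 j => cases j <;> simp [pairBound]
  | case2 i => simp [pairBound]
  | case3 j => rcases j with _ | j <;> simp [pairBound]
  | case4 i => simp [pairBound]
  | case5 i j h1 h2 h3 => rw [pairBound, h1, h2, h3]; ring

theorem pairWins_pairBound [Fintype Y] {m : ℕ} (hm : Fintype.card Y = m + 2) (i j : ℕ) :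
    PairWins X Y (i + 2) (j + 2) (pairBound m i j) := by
  have hrow : ∀ j, PairWins X Y 3 (j + 2) (1 + (2 * m + 3) * j) := by
    intro j
    induction j with
    | zero => exact (pairWins_two_left _).symm
    | succ j ih =>
      have h := pairWins_two_left (X := X) (Y := Y) (j + 3)
      convert pairWins_step hm (by omega) (by omega) h ih (h.constWins_left (by omega)) using 1
      ring
  fun_induction pairBound m i j with
  | case1 j => exact pairWins_two_left _
  | case2 i => exact (pairWins_two_left _).symm
  | case3 j => exact hrow _
  | case4 i => exact (hrow (i + 2)).symm
  | case5 i j h1 h2 h3 =>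
    exact pairWins_step hm (by omega) (by omega) h1 h2 (h3.constWins (by omega) (by omega))

end PairGame

section GeneralTrees

variable {X Y : Type*}

/-- Every tree of depth greater than `E` contains a threshold of size `n`, whose points and upper
labels are points and labels of the tree. -/
def Wins (X Y : Type*) (n E : ℕ) : Prop :=
  ∀ (D : X → Prop) (R : Y → Prop) (P : X → Y → Y → Prop) (H : Set (X → Y)),
    (∀ x p q, P x p q → D x ∧ R p ∧ R q) → Shatters P (E + 1) H → HasThreshold D R H n

/-- The situation of `Wins` for trees such that some label `c` occurs at all nodes and such that
some `h ∈ H` is constantly `c` on the tree. -/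
def StarWins (X Y : Type*) (n E : ℕ) : Prop :=
  ∀ (D : X → Prop) (R : Y → Prop) (P : X → Y → Y → Prop) (H : Set (X → Y)) (h : X → Y) (c : Y),
    h ∈ H → (∀ x p q, P x p q → (D x ∧ h x = c) ∧ R p ∧ R q ∧ (p = c ∨ q = c)) →
    Shatters P (E + 1) H → HasThreshold D R H n

theorem Wins.mono {n E E' : ℕ} (h : Wins X Y n E) (hE : E ≤ E') : Wins X Y n E' :=
  fun D R P H hP hS => h D R P H hP (hS.of_le (by omega))

theorem wins_of_subsingleton [Subsingleton Y] (n E : ℕ) : Wins X Y n E :=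
  fun _ _ _ _ _ ⟨_, _, _, hab, _⟩ => absurd (Subsingleton.elim _ _) hab

theorem wins_one : Wins X Y 1 0 := by
  rintro D R P H hP ⟨x, a, b, hab, hx, ⟨g, hg, hgx⟩, -⟩
  obtain ⟨hD, -, hb⟩ := hP _ _ _ hx
  exact ⟨_, _, _, _, isThreshold_one hD hb hab hg hgx⟩

theorem wins_two [Fintype Y] : Wins X Y 2 (Fintype.card Y) := by
  intro D R P H hP hS
  obtain ⟨h, hh⟩ := hS.nonempty
  have hsum : Fintype.card Y = ∑ _ : Y, 1 := by simp
  rw [hsum] at hS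
  obtain ⟨c, -, x, a, b, hab, ⟨hx, hc⟩, ha, hb⟩ := hS.exists_color Finset.univ
    (fun c x _ _ => h x = c) (fun _ => 1) fun x _ _ _ _ => ⟨h x, by simp⟩
  obtain ⟨hD, hRa, hRb⟩ := hP _ _ _ hx
  obtain ⟨r, hrR, hrc, hS⟩ : ∃ r, R r ∧ c ≠ r ∧
      Shatters (fun x a b => P x a b ∧ h x = c) 1 {g ∈ H | g x = r} := by
    by_cases hca : c = a
    · exact ⟨b, hRb, hca ▸ hab, hb⟩
    · exact ⟨a, hRa, hca, ha⟩
  obtain ⟨x', p, q, hpq, ⟨hx', hc'⟩, ⟨g, hg, hgx⟩, ⟨g', hg', hgx'⟩⟩ := hS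
  have hD' : D x' ∧ h x' = c := ⟨(hP _ _ _ hx').1, hc'⟩
  obtain ⟨s, f, hsr, hf, hfs⟩ : ∃ s, ∃ f ∈ {g ∈ H | g x = r}, s ≠ r ∧ f x' = s := by
    by_cases hpr : p = r
    · exact ⟨q, g', hg', fun h => hpq (hpr.trans h.symm), hgx'⟩
    · exact ⟨p, g, hg, hpr, hgx⟩
  have h1 : HasThreshold (fun x => D x ∧ h x = c) (· = r) {g ∈ H | g x = r} 1 :=
    ⟨_, _, _, _, isThreshold_one hD' rfl hf hsr hfs⟩
  exact (h1.snoc_const one_pos hh hD hc hrc).mono (fun _ => id) (fun _ h => h ▸ hrR) subset_rfl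

theorem starWins_three : StarWins X Y 3 2 := by
  intro D R P H h c hh hP hS
  obtain ⟨x, a, b, hab, hx, ha, hb⟩ := hS
  obtain ⟨⟨hD, hc⟩, hRa, hRb, hcab⟩ := hP _ _ _ hx
  obtain ⟨r, hrR, hcr, hS⟩ : ∃ r, R r ∧ c ≠ r ∧ Shatters P 2 {g ∈ H | g x = r} := by
    rcases hcab with rfl | rfl
    · exact ⟨b, hRb, hab, hb⟩
    · exact ⟨a, hRa, hab.symm, ha⟩
  obtain ⟨x', s, f, hf⟩ := hS.isThreshold_two (D := fun x => D x ∧ h x = c) (R := R) hP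
  exact ⟨_, _, _, _, (hf.snoc (H := H) (fun _ hg => hg.1) hh hD hc (fun _ hg => hg.2) hcr
    (fun _ => hcr) (by simp)).mono (fun _ => id) (by grind) subset_rfl⟩

theorem PairWins.starWins [Fintype Y] {n E : ℕ} (hn : 0 < n) (hw : PairWins X Y n (n + 1) E) :
    StarWins X Y (n + 1) ((Fintype.card Y - 1) * (E + 1)) := by
  classical
  intro D R P H h c hh hP hS
  have hsum : (Fintype.card Y - 1) * (E + 1) = ∑ _ ∈ Finset.univ.erase c, (E + 1) := by simp
  rw [hsum] at hS
  obtain ⟨r, hr, hS⟩ := hS.exists_color _ (fun r _ p q => p = r ∨ q = r) (fun _ => E + 1)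
    fun x a b hab hx => by
      rcases (hP _ _ _ hx).2.2.2 with rfl | rfl
      · exact ⟨b, by simpa using hab.symm, Or.inr rfl⟩
      · exact ⟨a, by simpa using hab, Or.inl rfl⟩
  have hcr : c ≠ r := (Finset.ne_of_mem_erase hr).symm
  have hR : R r ∧ R c := by
    obtain ⟨x, p, q, _, ⟨hx, hx'⟩, _⟩ := hS
    have := hP _ _ _ hx
    grind
  rcases hw.extend_left hn hcr hh hcr
    (fun x p q hx => ⟨(hP _ _ _ hx.1).1, (hP _ _ _ hx.1).2.2.2, hx.2⟩) hS with h1 | h1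
  · exact h1.mono (fun _ => id) (fun _ h => h ▸ hR.1) subset_rfl
  · exact h1.mono (fun _ => id) (fun _ h => h ▸ hR.2) subset_rfl

theorem PairWins.wins [Fintype Y] {n E : ℕ} (hw : PairWins X Y n n E) :
    Wins X Y n ((Fintype.card Y).choose 2 * E) := by
  classical
  intro D R P H hP hS
  have hsum : (Fintype.card Y).choose 2 * E =
      ∑ _ ∈ Finset.powersetCard 2 (Finset.univ : Finset Y), E := by simp
  rw [hsum] at hS
  obtain ⟨s, hs, hS⟩ := hS.exists_color _ (fun s _ p q => {p, q} = s) (fun _ => E)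
    fun x a b hab _ => ⟨{a, b}, by simp [Finset.mem_powersetCard, Finset.card_pair hab], rfl⟩
  obtain ⟨a, b, hab, rfl⟩ := Finset.card_eq_two.1 (Finset.mem_powersetCard.1 hs).2
  have hpq : ∀ p q : Y, ({p, q} : Finset Y) = {a, b} →
      (p = a ∨ q = a) ∧ (p = b ∨ q = b) := by
    intro p q h
    have h1 : a ∈ ({p, q} : Finset Y) := h ▸ by simp
    have h2 : b ∈ ({p, q} : Finset Y) := h ▸ by simp
    simp only [Finset.mem_insert, Finset.mem_singleton] at h1 h2
    grind
  have hR : R a ∧ R b := by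
    obtain ⟨x, p, q, _, ⟨hx, hx'⟩, _⟩ := hS
    have := hP _ _ _ hx
    have := hpq _ _ hx'
    grind
  rcases hw D _ H a b hab (fun x p q hx => ⟨(hP _ _ _ hx.1).1, hpq _ _ hx.2⟩) hS with h1 | h1
  · exact h1.mono (fun _ => id) (fun _ h => h ▸ hR.2) subset_rfl
  · exact h1.mono (fun _ => id) (fun _ h => h ▸ hR.1) subset_rfl

/-- For every `b ∈ B` there is a point `z` on which all of `H'` takes the value `b`, while `h`
takes the value `c ≠ b`. -/
def Pinned (D : X → Prop) (R : Y → Prop) (h : X → Y) (c : Y) (B : Finset Y)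
    (H' : Set (X → Y)) : Prop :=
  ∀ b ∈ B, (R b ∧ b ≠ c) ∧ ∃ z, (D z ∧ h z = c) ∧ ∀ g ∈ H', g z = b

/-- If at most one label of each node is in `B`, then descending from the root one can pin down
one more label. -/
theorem Pinned.insert [DecidableEq Y] {D : X → Prop} {R : Y → Prop} {P : X → Y → Y → Prop}
    {h : X → Y} {c : Y} {B : Finset Y} {H' : Set (X → Y)} {n : ℕ} (hB : Pinned D R h c B H')
    (hP : ∀ x p q, P x p q → (D x ∧ h x = c) ∧ (R p ∧ p ≠ c) ∧ (R q ∧ q ≠ c))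
    (hPB : ∀ x p q, P x p q → p ∈ B → q ∈ B → p = q) (hS : Shatters P (n + 1) H') :
    ∃ r ∉ B, ∃ H'' ⊆ H', Pinned D R h c (insert r B) H'' ∧ Shatters P n H'' := by
  obtain ⟨x, p, q, hpq, hx, hp, hq⟩ := hS
  obtain ⟨r, hrB, hr, hS⟩ : ∃ r ∉ B, (R r ∧ r ≠ c) ∧ Shatters P n {g ∈ H' | g x = r} := by
    by_cases hpB : p ∈ B
    · exact ⟨q, fun hqB => hpq (hPB _ _ _ hx hpB hqB), (hP _ _ _ hx).2.2, hq⟩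
    · exact ⟨p, hpB, (hP _ _ _ hx).2.1, hp⟩
  refine ⟨r, hrB, _, fun _ hg => hg.1, fun b hb => ?_, hS⟩
  rcases Finset.mem_insert.1 hb with rfl | hb
  · exact ⟨hr, x, (hP _ _ _ hx).1, fun _ hg => hg.2⟩
  · obtain ⟨hb, z, hz, hz'⟩ := hB b hb
    exact ⟨hb, z, hz, fun g hg => hz' g hg.1⟩

theorem ConstWins.exists_pinned {N e : ℕ} (hw : ConstWins X Y N N e) {D : X → Prop}
    {R : Y → Prop} {P : X → Y → Y → Prop} {H : Set (X → Y)} {h : X → Y} {c : Y} (hh : h ∈ H)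
    (hP : ∀ x p q, P x p q → (D x ∧ h x = c) ∧ (R p ∧ p ≠ c) ∧ (R q ∧ q ≠ c)) (s M : ℕ)
    (hS : Shatters P (s + s.choose 2 * e + M) H) :
    HasThreshold D R H N ∨ ∃ (B : Finset Y) (P' : X → Y → Y → Prop), ∃ H' ⊆ H, B.card = s ∧
      Pinned D R h c B H' ∧ (∀ x p q, P' x p q → P x p q) ∧
      (∀ x p q, P' x p q → p ∈ B → q ∈ B → p = q) ∧ Shatters P' M H' := by
  classical
  induction s generalizing M with
  | zero =>
    exact Or.inr ⟨∅, P, H, subset_rfl, rfl, by simp [Pinned], fun _ _ _ => id, by simp,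
      hS.of_le (by simp)⟩
  | succ s ih =>
    have hs : s + 1 + (s + 1).choose 2 * e + M = s + s.choose 2 * e + (s * e + M + 1) := by
      rw [Nat.choose_succ_succ' s 1, Nat.choose_one_right]
      ring
    rw [hs] at hS
    rcases ih _ hS with h1 | ⟨B, P', H', hH', hBs, hB, hP', hPB, hS⟩
    · exact Or.inl h1
    obtain ⟨r, hr, H'', hH'', hrB, hS⟩ := hB.insert (fun x p q hx => hP _ _ _ (hP' _ _ _ hx)) hPB hS
    have hsum : s * e = ∑ _ ∈ B, e := by simp [hBs]
    rw [hsum] at hS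
    rcases hS.split_finset B (fun b _ p q => (p = r ∨ q = r) ∧ (p = b ∨ q = b)) (fun _ => e)
      with ⟨b, hb, hS⟩ | hS
    · left
      obtain ⟨⟨hRr, hrc⟩, -⟩ := hrB r (by simp)
      obtain ⟨⟨hRb, hbc⟩, -⟩ := hB b hb
      rcases hw D _ H r b c h (fun h => hr (h ▸ hb)) hh hrc.symm hbc.symm
        (fun x p q hx => ⟨(hP _ _ _ (hP' _ _ _ hx.1)).1, hx.2⟩)
        (hS.mono (fun _ _ _ => id) (hH''.trans hH')) with h1 | h1
      · exact h1.mono (fun _ => id) (fun _ h => h ▸ hRb) subset_rfl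
      · exact h1.mono (fun _ => id) (fun _ h => h ▸ hRr) subset_rfl
    · refine Or.inr ⟨insert r B, _, H'', hH''.trans hH', by simp [hr, hBs], hrB,
        fun x p q hx => hP' _ _ _ hx.1, fun x p q hx hp hq => ?_, hS⟩
      have h1 := hPB _ _ _ hx.1
      have h2 := hx.2
      simp only [Finset.mem_insert] at hp hq
      grind

theorem Wins.succ [Fintype Y] {n E e S : ℕ} (hw : Wins X Y n E)
    (he : ConstWins X Y (n + 1) (n + 1) e) (hs : StarWins X Y (n + 1) S) :
    Wins X Y (n + 1) (Fintype.card Y * (n + 1 + n.choose 2 * e + E + S)) := by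
  classical
  intro D R P H hP hS
  obtain ⟨h, hh⟩ := hS.nonempty
  set T := n + 1 + n.choose 2 * e + E + S with hT
  have hsum : Fintype.card Y * T = ∑ _ : Y, T := by simp
  rw [hsum] at hS
  obtain ⟨c, -, hS⟩ := hS.exists_color Finset.univ
    (fun c x _ _ => h x = c) (fun _ => T) fun x _ _ _ _ => ⟨h x, by simp⟩
  rcases hS.split (fun _ p q => p = c ∨ q = c) (m := S + 1)
    (n := n + n.choose 2 * e + (E + 1 + 1)) (by omega) with hS | hS
  · exact hs D R _ H h c hh (fun x p q hx => ⟨⟨(hP _ _ _ hx.1.1).1, hx.1.2⟩,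
      (hP _ _ _ hx.1.1).2.1, (hP _ _ _ hx.1.1).2.2, hx.2⟩) hS
  have hP' : ∀ x p q, ((P x p q ∧ h x = c) ∧ ¬(p = c ∨ q = c)) →
      (D x ∧ h x = c) ∧ (R p ∧ p ≠ c) ∧ (R q ∧ q ≠ c) := fun x p q hx => by
    have := hP _ _ _ hx.1.1
    grind
  rcases he.exists_pinned hh hP' n (E + 1 + 1) hS with h1 | ⟨B, P', H', hH', hBn, hB, hP'', hPB, hS⟩
  · exact h1
  obtain ⟨r, hr, H'', hH'', hrB, hS⟩ := hB.insert (fun x p q hx => hP' _ _ _ (hP'' _ _ _ hx)) hPB hS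
  obtain ⟨x, y, y', f, hf⟩ := hw (fun x => D x ∧ h x = c) (fun z => R z ∧ z ≠ c) P' H''
    (fun x p q hx => hP' _ _ _ (hP'' _ _ _ hx)) hS
  obtain ⟨b, hb, hby⟩ : ∃ b ∈ insert r B, b ∉ Finset.univ.image y :=
    Finset.exists_mem_notMem_of_card_lt_card (by
      rw [Finset.card_insert_of_notMem hr, hBn]
      exact Nat.lt_succ_of_le (Finset.card_image_le.trans (by simp)))
  obtain ⟨⟨hRb, hbc⟩, z, hz, hzb⟩ := hrB b hb
  refine ⟨_, _, _, _, (hf.snoc (hH''.trans hH') hh hz.1 hz.2 hzb hbc.symm (fun i hi => hby ?_)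
    (by simp)).mono (fun _ => id) (by grind) subset_rfl⟩
  exact Finset.mem_image.2 ⟨i, by simp, hi⟩

end GeneralTrees

section Bounds

/-- The depth of a tree which suffices for a threshold of size `t`, for `k` labels. -/
def thresholdDepth (k : ℕ) : ℕ → ℕ
  | 0 => 0
  | t + 1 => 2 * k * thresholdDepth k t + 1

theorem pow_le_thresholdDepth (k t : ℕ) : (2 * k) ^ t ≤ thresholdDepth k (t + 1) := by
  induction t with
  | zero => simp [thresholdDepth]
  | succ t ih =>
    rw [thresholdDepth, pow_succ']
    exact (Nat.mul_le_mul_left _ ih).trans (Nat.le_succ _)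

theorem pow_add_pow_le_thresholdDepth (k t : ℕ) :
    (2 * k) ^ (t + 1) + (2 * k) ^ t ≤ thresholdDepth k (t + 2) := by
  induction t with
  | zero => simp [thresholdDepth]
  | succ t ih =>
    rw [thresholdDepth, pow_succ' (2 * k) (t + 1), pow_succ' (2 * k) t, ← mul_add, ← pow_succ']
    exact (Nat.mul_le_mul_left _ ih).trans (Nat.le_succ _)

theorem pairBound_add_two_le {m : ℕ} {γ μ : ℝ} (hγ : 2 ≤ γ) (hdiag : m + 2 * γ ≤ μ)
    (hoff : γ * (m + γ) ≤ μ * (γ - 1)) (i d : ℕ) :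
    (pairBound m (i + 1) (i + 1 + d) : ℝ) + 2 ≤ (2 * m + 6) * γ ^ d * μ ^ i := by
  have hm : (0 : ℝ) ≤ m := m.cast_nonneg
  have hμ : 0 < μ := by linarith
  induction i generalizing d with
  | zero =>
    have hrow : ∀ d : ℕ, (pairBound m 1 (d + 1) : ℝ) + 2 ≤ (2 * m + 6) * γ ^ d := by
      intro d
      induction d with
      | zero => simp [pairBound]; linarith
      | succ d ih =>
        have h1 : (1 : ℝ) ≤ γ ^ d := one_le_pow₀ (by linarith)
        have h2 : (2 * m + 6) * γ ^ d * 2 ≤ (2 * m + 6) * γ ^ d * γ :=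
          mul_le_mul_of_nonneg_left hγ (by positivity)
        have h3 : (2 * (m : ℝ) + 6) * 1 ≤ (2 * m + 6) * γ ^ d :=
          mul_le_mul_of_nonneg_left h1 (by positivity)
        simp only [pairBound] at ih ⊢
        push_cast at ih ⊢
        rw [pow_succ]
        nlinarith
    simpa [add_comm] using hrow d
  | succ i ih =>
    have hrec : ∀ j, (pairBound m (i + 2) (j + 2) : ℝ) + 2 = (pairBound m (i + 1) (j + 2) + 2) +
        (pairBound m (i + 2) (j + 1) + 2) + m * (pairBound m (i + 1) (j + 1) + 2) := by
      intro j
      rw [pairBound]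
      push_cast
      ring
    induction d with
    | zero =>
      have h0 := ih 0
      have h1 := ih 1
      have hc := pairBound_comm m (i + 2) (i + 1)
      have h2 := hrec i
      simp only [add_zero, pow_zero, pow_one, mul_one] at h0 h1 ⊢
      rw [h2, hc]
      have h3 : (m : ℝ) * (pairBound m (i + 1) (i + 1) + 2) ≤ m * ((2 * m + 6) * μ ^ i) :=
        mul_le_mul_of_nonneg_left h0 hm
      have h4 : (2 * (m : ℝ) + 6) * μ ^ i * (m + 2 * γ) ≤ (2 * m + 6) * μ ^ i * μ :=
        mul_le_mul_of_nonneg_left hdiag (by positivity)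
      rw [pow_succ]
      nlinarith
    | succ d ihd =>
      have h1 := ih (d + 2)
      have h0 := ih (d + 1)
      have h2 := hrec (i + 1 + d)
      have h3 : (m : ℝ) * (pairBound m (i + 1) (i + 1 + (d + 1)) + 2) ≤
          m * ((2 * m + 6) * γ ^ (d + 1) * μ ^ i) :=
        mul_le_mul_of_nonneg_left h0 hm
      have h4 : (2 * (m : ℝ) + 6) * γ ^ d * μ ^ i * (γ * (m + γ)) ≤
          (2 * m + 6) * γ ^ d * μ ^ i * (μ * (γ - 1)) :=
        mul_le_mul_of_nonneg_left hoff (by positivity)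
      have e1 : i + 1 + 1 + (d + 1) = i + 1 + d + 2 := by ring
      have e2 : i + 1 + (d + 2) = i + 1 + d + 2 := by ring
      have e3 : i + 1 + 1 + d = i + 1 + d + 1 := by ring
      have e4 : i + 1 + (d + 1) = i + 1 + d + 1 := by ring
      rw [e1, h2]
      rw [e2] at h1
      rw [e3] at ihd
      rw [e4] at h3
      calc _ ≤ (2 * m + 6) * γ ^ (d + 2) * μ ^ i + (2 * m + 6) * γ ^ d * μ ^ (i + 1) +
            m * ((2 * m + 6) * γ ^ (d + 1) * μ ^ i) := by gcongr
        _ = (2 * m + 6) * γ ^ d * μ ^ i * (γ * (m + γ)) +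
            (2 * m + 6) * γ ^ d * μ ^ (i + 1) := by ring
        _ ≤ (2 * m + 6) * γ ^ d * μ ^ i * (μ * (γ - 1)) +
            (2 * m + 6) * γ ^ d * μ ^ (i + 1) := by gcongr
        _ = (2 * m + 6) * γ ^ (d + 1) * μ ^ (i + 1) := by ring

theorem pairBound_diag_le {m : ℕ} {γ μ : ℝ} (hγ : 2 ≤ γ) (hdiag : m + 2 * γ ≤ μ)
    (hoff : γ * (m + γ) ≤ μ * (γ - 1)) (i : ℕ) :
    (pairBound m (i + 2) (i + 2) : ℝ) ≤ (2 * m + 6) * (m + 2 * γ) * μ ^ i := by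
  have h0 := pairBound_add_two_le hγ hdiag hoff i 0
  have h1 := pairBound_add_two_le hγ hdiag hoff i 1
  have hc := pairBound_comm m (i + 2) (i + 1)
  have h3 := mul_le_mul_of_nonneg_left h0 (m.cast_nonneg (α := ℝ))
  simp only [add_zero, pow_zero, pow_one, mul_one] at h0 h1 h3
  rw [pairBound, hc]
  push_cast
  nlinarith

/-- A sufficient condition for `thresholdDepth` to bound the cost of first passing to a subtree
with only two labels. -/
theorem choose_mul_pairBound_le {m i : ℕ} {γ μ : ℝ} (hγ : 2 ≤ γ) (hdiag : m + 2 * γ ≤ μ)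
    (hoff : γ * (m + γ) ≤ μ * (γ - 1))
    (h : (m + 1) * (2 * m + 6) * (m + 2 * γ) * μ ^ i ≤ 4 * thresholdDepth (m + 2) (i + 3)) :
    (m + 2).choose 2 * pairBound m (i + 2) (i + 2) ≤
      2 * (m + 2) * thresholdDepth (m + 2) (i + 3) := by
  have h1 := pairBound_diag_le hγ hdiag hoff i
  have h2 : ((m + 2).choose 2 : ℝ) = (m + 2) * (m + 1) / 2 := by
    rw [Nat.cast_choose_two]
    push_cast
    ring
  have h3 : (((m + 2).choose 2 * pairBound m (i + 2) (i + 2) : ℕ) : ℝ) ≤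
      (2 * (m + 2) * thresholdDepth (m + 2) (i + 3) : ℕ) := by
    push_cast
    rw [h2]
    calc _ ≤ ((m : ℝ) + 2) * (m + 1) / 2 * ((2 * m + 6) * (m + 2 * γ) * μ ^ i) := by gcongr
      _ = ((m : ℝ) + 2) / 2 * ((m + 1) * (2 * m + 6) * (m + 2 * γ) * μ ^ i) := by ring
      _ ≤ ((m : ℝ) + 2) / 2 * (4 * thresholdDepth (m + 2) (i + 3)) := by gcongr
      _ = _ := by ring
  exact_mod_cast h3

theorem choose_mul_pairBound_le_of_le_four {m : ℕ} (hm : m ≤ 4) (i : ℕ) :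
    (m + 2).choose 2 * pairBound m (i + 2) (i + 2) ≤
      2 * (m + 2) * thresholdDepth (m + 2) (i + 3) := by
  refine choose_mul_pairBound_le (γ := 2) (μ := 2 * (m + 2)) le_rfl
    (by linarith [m.cast_nonneg (α := ℝ)]) (by linarith) ?_
  have h1 := pow_add_pow_le_thresholdDepth (m + 2) (i + 1)
  have h2 : (((2 * (m + 2)) ^ (i + 2) + (2 * (m + 2)) ^ (i + 1) : ℕ) : ℝ) ≤
    thresholdDepth (m + 2) (i + 3) := by exact_mod_cast h1
  push_cast at h2
  have h3 : ((m : ℝ) + 1) * (2 * m + 6) * (m + 2 * 2) ≤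
      4 * ((2 * (m + 2)) ^ 2 + 2 * (m + 2)) := by
    interval_cases m <;> norm_num
  calc ((m : ℝ) + 1) * (2 * m + 6) * (m + 2 * 2) * (2 * (m + 2)) ^ i
      ≤ 4 * ((2 * (m + 2)) ^ 2 + 2 * (m + 2)) * (2 * (m + 2)) ^ i := by gcongr
    _ = 4 * ((2 * (m + 2)) ^ (i + 2) + (2 * (m + 2)) ^ (i + 1)) := by ring
    _ ≤ _ := by gcongr

theorem choose_mul_pairBound_le_of_le_fourteen {m : ℕ} (hm : 5 ≤ m) (hm' : m ≤ 14) (i : ℕ) :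
    (m + 2).choose 2 * pairBound m (i + 6) (i + 6) ≤
      2 * (m + 2) * thresholdDepth (m + 2) (i + 7) := by
  have hm₀ : (5 : ℝ) ≤ m := by exact_mod_cast hm
  refine choose_mul_pairBound_le (i := i + 4) (γ := 3) (μ := 3 * (m + 3) / 2) (by norm_num)
    (by linarith) (by linarith) ?_
  have h1 := pow_add_pow_le_thresholdDepth (m + 2) (i + 5)
  have h2 : (((2 * (m + 2)) ^ (i + 6) + (2 * (m + 2)) ^ (i + 5) : ℕ) : ℝ) ≤
    thresholdDepth (m + 2) (i + 7) := by exact_mod_cast h1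
  push_cast at h2
  have h3 : ((m : ℝ) + 1) * (2 * m + 6) * (m + 2 * 3) * (3 * (m + 3) / 2) ^ 4 ≤
      4 * ((2 * (m + 2)) ^ 6 + (2 * (m + 2)) ^ 5) := by
    interval_cases m <;> norm_num
  calc ((m : ℝ) + 1) * (2 * m + 6) * (m + 2 * 3) * (3 * (m + 3) / 2) ^ (i + 4)
      = ((m : ℝ) + 1) * (2 * m + 6) * (m + 2 * 3) * (3 * (m + 3) / 2) ^ 4 *
        (3 * (m + 3) / 2) ^ i := by ring
    _ ≤ 4 * ((2 * (m + 2)) ^ 6 + (2 * (m + 2)) ^ 5) * (2 * (m + 2)) ^ i := by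
      gcongr
      linarith
    _ = 4 * ((2 * (m + 2)) ^ (i + 6) + (2 * (m + 2)) ^ (i + 5)) := by ring
    _ ≤ _ := by gcongr

theorem step_le_of_fifteen_le {m : ℕ} (hm : 15 ≤ m) (i : ℕ) :
    i + 7 + (i + 6).choose 2 * (pairBound m (i + 4) (i + 4) + 2) +
      (m + 1) * (pairBound m (i + 4) (i + 5) + 1) ≤ thresholdDepth (m + 2) (i + 6) := by
  have hm₀ : (15 : ℝ) ≤ m := by exact_mod_cast hm
  have hγ : (2 : ℝ) ≤ 3 := by norm_num
  have hdiag : (m : ℝ) + 2 * 3 ≤ 3 * (m + 3) / 2 := by linarith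
  have hoff : (3 : ℝ) * (m + 3) ≤ 3 * (m + 3) / 2 * (3 - 1) := by linarith
  have h0 := pairBound_add_two_le hγ hdiag hoff (i + 3) 0
  have h1 := pairBound_add_two_le hγ hdiag hoff (i + 3) 1
  have hD : (((2 * (m + 2)) ^ (i + 5) : ℕ) : ℝ) ≤ thresholdDepth (m + 2) (i + 6) := by
    exact_mod_cast pow_le_thresholdDepth (m + 2) (i + 5)
  push_cast at hD
  have hch : ((i + 6).choose 2 : ℝ) = (i + 6) * (i + 5) / 2 := by
    rw [Nat.cast_choose_two]
    push_cast
    ring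
  have key : ∀ i : ℕ, (i : ℝ) + 7 + (2 * m + 6) * (3 * (m + 3) / 2) ^ (i + 3) *
      ((i + 6) * (i + 5) / 2 + 3 * (m + 1)) ≤ (2 * (m + 2)) ^ (i + 5) := by
    intro i
    induction i with
    | zero =>
      obtain ⟨s, rfl⟩ := Nat.exists_eq_add_of_le hm
      push_cast
      rw [← sub_nonneg]
      ring_nf
      positivity
    | succ i ih =>
      have hi : (0 : ℝ) ≤ i := i.cast_nonneg
      have h2 : 3 * ((m : ℝ) + 3) / 2 * ((i + 7) * (i + 6) / 2 + 3 * (m + 1)) ≤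
          2 * (m + 2) * ((i + 6) * (i + 5) / 2 + 3 * (m + 1)) := by
        nlinarith [mul_nonneg hi hi, mul_nonneg hi (sub_nonneg.2 hm₀),
          mul_nonneg (mul_nonneg hi hi) (sub_nonneg.2 hm₀), sq_nonneg ((i : ℝ) - 3)]
      calc ((i + 1 : ℕ) : ℝ) + 7 + (2 * m + 6) * (3 * (m + 3) / 2) ^ (i + 1 + 3) *
            (((i + 1 : ℕ) + 6) * ((i + 1 : ℕ) + 5) / 2 + 3 * (m + 1))
          = (i : ℝ) + 8 + (2 * m + 6) * (3 * (m + 3) / 2) ^ (i + 3) *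
            (3 * (m + 3) / 2 * ((i + 7) * (i + 6) / 2 + 3 * (m + 1))) := by
            push_cast
            ring
        _ ≤ (2 * (m + 2)) * (i + 7) + (2 * m + 6) * (3 * (m + 3) / 2) ^ (i + 3) *
            (2 * (m + 2) * ((i + 6) * (i + 5) / 2 + 3 * (m + 1))) := by
            gcongr
            nlinarith
        _ = 2 * (m + 2) * (i + 7 + (2 * m + 6) * (3 * (m + 3) / 2) ^ (i + 3) *
            ((i + 6) * (i + 5) / 2 + 3 * (m + 1))) := by ring
        _ ≤ 2 * (m + 2) * (2 * (m + 2)) ^ (i + 5) := by gcongr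
        _ = _ := by ring
  have hfin : ((i + 7 + (i + 6).choose 2 * (pairBound m (i + 4) (i + 4) + 2) +
      (m + 1) * (pairBound m (i + 4) (i + 5) + 1) : ℕ) : ℝ) ≤ thresholdDepth (m + 2) (i + 6) := by
    push_cast
    rw [hch]
    simp only [add_assoc, add_zero, pow_zero, pow_one, mul_one, Nat.reduceAdd] at h0 h1
    calc _ ≤ (i : ℝ) + 7 + (i + 6) * (i + 5) / 2 * ((2 * m + 6) * (3 * (m + 3) / 2) ^ (i + 3)) +
          (m + 1) * ((2 * m + 6) * 3 * (3 * (m + 3) / 2) ^ (i + 3)) := by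
          gcongr
          linarith
      _ = (i : ℝ) + 7 + (2 * m + 6) * (3 * (m + 3) / 2) ^ (i + 3) *
          ((i + 6) * (i + 5) / 2 + 3 * (m + 1)) := by ring
      _ ≤ _ := (key i).trans hD
  exact_mod_cast hfin

end Bounds

section Assembly

variable {X Y : Type*}

theorem wins_three [Fintype Y] {m : ℕ} (hm : Fintype.card Y = m + 2) :
    Wins X Y 3 ((m + 2) * (m + 10)) := by
  convert wins_two.succ ((pairWins_two_left 2).constWins two_pos two_pos) starWins_three using 1
  rw [hm]
  simp
  ring

/-- The bound on the cost of passing from thresholds of size `i + 3` to size `i + 4`. -/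
theorem Wins.step [Fintype Y] {m i E E' : ℕ} (hm : Fintype.card Y = m + 2)
    (h : Wins X Y (i + 3) E)
    (hE : (m + 2) * (i + 4 + (i + 3).choose 2 * (pairBound m (i + 1) (i + 1) + 2) + E +
      (m + 1) * (pairBound m (i + 1) (i + 2) + 1)) ≤ E') : Wins X Y (i + 4) E' := by
  have h1 := h.succ ((pairWins_pairBound hm (i + 1) (i + 1)).constWins (by omega) (by omega))
    ((pairWins_pairBound hm (i + 1) (i + 2)).starWins (by omega))
  rw [hm] at h1
  exact h1.mono hE

theorem wins_of_le_seven [Fintype Y] {m : ℕ} (hm : Fintype.card Y = m + 2) (hm5 : 5 ≤ m) (n : ℕ)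
    (hn3 : 3 ≤ n) (hn7 : n ≤ 7) : Wins X Y n (2 * (m + 2) * thresholdDepth (m + 2) (n - 1)) := by
  have w3 := wins_three (X := X) hm
  have w4 := w3.step hm le_rfl
  have w5 := w4.step hm le_rfl
  have w6 := w5.step hm le_rfl
  have w7 := w6.step hm le_rfl
  obtain ⟨s, rfl⟩ := Nat.exists_eq_add_of_le hm5
  interval_cases n
  · refine w3.mono ?_
    simp [thresholdDepth]
    ring_nf
    omega
  · refine w4.mono ?_
    simp [thresholdDepth, pairBound, Nat.choose]
    ring_nf
    omega
  · refine w5.mono ?_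
    simp [thresholdDepth, pairBound, Nat.choose]
    ring_nf
    omega
  · refine w6.mono ?_
    simp [thresholdDepth, pairBound, Nat.choose]
    ring_nf
    omega
  · refine w7.mono ?_
    simp [thresholdDepth, pairBound, Nat.choose]
    ring_nf
    omega

theorem wins_thresholdDepth [Fintype Y] {m : ℕ} (hm : Fintype.card Y = m + 2) (n : ℕ) :
    Wins X Y (n + 1) (2 * (m + 2) * thresholdDepth (m + 2) n) := by
  rcases n with _ | _ | _ | i
  · exact wins_one
  · refine wins_two.mono ?_
    simp [hm, thresholdDepth]
  · refine (wins_three hm).mono ?_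
    simp [thresholdDepth]
    nlinarith
  have hpair : (m + 2).choose 2 * pairBound m (i + 2) (i + 2) ≤
      2 * (m + 2) * thresholdDepth (m + 2) (i + 3) →
      Wins X Y (i + 4) (2 * (m + 2) * thresholdDepth (m + 2) (i + 3)) := fun h =>
    Wins.mono (hm ▸ (pairWins_pairBound hm (i + 2) (i + 2)).wins) h
  by_cases h4 : m ≤ 4
  · exact hpair (choose_mul_pairBound_le_of_le_four h4 i)
  by_cases h7 : i ≤ 3
  · exact wins_of_le_seven hm (by omega) (i + 4) (by omega) (by omega)
  obtain ⟨j, rfl⟩ := Nat.exists_eq_add_of_lt (not_le.1 h7)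
  by_cases h14 : m ≤ 14
  · have := choose_mul_pairBound_le_of_le_fourteen (by omega) h14 j
    exact hpair (by convert this using 3 <;> ring)
  have hw : ∀ j, Wins X Y (j + 6) (2 * (m + 2) * thresholdDepth (m + 2) (j + 5)) := by
    intro j
    induction j with
    | zero => exact wins_of_le_seven hm (by omega) 6 (by omega) (by omega)
    | succ j ih =>
      refine Wins.step hm (i := j + 3) ih ?_
      have h1 := step_le_of_fifteen_le (m := m) (by omega) j
      have h2 : thresholdDepth (m + 2) (j + 6) =
        2 * (m + 2) * thresholdDepth (m + 2) (j + 5) + 1 := rfl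
      rw [show 2 * (m + 2) * thresholdDepth (m + 2) (j + 1 + 5) =
        (m + 2) * (2 * thresholdDepth (m + 2) (j + 6)) by ring_nf]
      refine Nat.mul_le_mul_left _ ?_
      simp only [add_assoc, Nat.reduceAdd] at h1 h2 ⊢
      omega
  convert hw (j + 2) using 1
  · ring
  · congr 2
    ring

theorem wins_of_card [Finite Y] {k : ℕ} (hk : 1 ≤ k) (hY : Nat.card Y = k) (n : ℕ) :
    Wins X Y (n + 1) (2 * k * thresholdDepth k n) := by
  have := Fintype.ofFinite Y
  rw [Nat.card_eq_fintype_card] at hY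
  obtain rfl | ⟨m, rfl⟩ : k = 1 ∨ ∃ m, k = m + 2 := by
    rcases k with _ | _ | m
    · omega
    · exact Or.inl rfl
    · exact Or.inr ⟨m, rfl⟩
  · have := Fintype.card_le_one_iff_subsingleton.1 hY.le
    exact wins_of_subsingleton _ _
  · exact wins_thresholdDepth hY n

theorem mLDge.shatters {d : ℕ} {H : Set (X → Y)} (h : mLDge H d) :
    Shatters (fun _ _ _ => True) d H := by
  induction d generalizing H with
  | zero =>
    obtain ⟨x, y, -, h⟩ := h
    obtain ⟨g, hg, -⟩ := h [] rfl
    exact ⟨g, hg⟩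
  | succ d ih =>
    obtain ⟨x, y, hne, h⟩ := h
    have hsub : ∀ c : Bool, mLDge {g ∈ H | g (x []) = y [c]} d := by
      intro c
      refine ⟨fun u => x (c :: u), fun u => y (c :: u),
        fun u hu => hne (c :: u) (by simpa using hu), fun σ hσ => ?_⟩
      obtain ⟨g, hg, hgx⟩ := h (c :: σ) (by simpa using hσ)
      exact ⟨g, ⟨hg, by simpa using hgx 0 (by simp)⟩,
        fun i hi => by simpa using hgx (i + 1) (by simpa using hi)⟩
    exact ⟨x [], y [false], y [true], hne [] (by simp), trivial, ih (hsub false), ih (hsub true)⟩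

theorem HasThreshold.mtdge {D : X → Prop} {R : Y → Prop} {H : Set (X → Y)} {t : ℕ}
    (h : HasThreshold D R H t) : MTDge H t := by
  obtain ⟨x, y, y', f, h⟩ := h
  exact ⟨x, y, y', f, h.ne, h.mem, h.eval⟩

theorem MTDge.of_le {H : Set (X → Y)} {s t : ℕ} (hst : s ≤ t) (h : MTDge H t) : MTDge H s := by
  obtain ⟨x, y, y', f, hne, hmem, h⟩ := h
  refine ⟨fun i => x (i.castLE hst), fun i => y (i.castLE hst), fun i => y' (i.castLE hst),
    fun i => f (i.castLE hst), fun _ _ => hne _ _, fun _ => hmem _, fun i j => ?_⟩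
  simpa using h (i.castLE hst) (j.castLE hst)

/-- The function `f_k` defined by the recursion `f_k(d) = 1 + f_k(⌈d/(2k)⌉ - 1)`. -/
def thresholdSize (k : ℕ) : ℕ → ℕ
  | 0 => 0
  | d + 1 => 1 + thresholdSize k (d / (2 * k))
decreasing_by exact Nat.lt_succ_of_le (Nat.div_le_self _ _)

theorem ceil_div_sub_one {k : ℕ} (hk : 1 ≤ k) (d : ℕ) :
    (d + 1 + 2 * k - 1) / (2 * k) - 1 = d / (2 * k) := by
  rw [show d + 1 + 2 * k - 1 = d + 2 * k by omega, Nat.add_div_right _ (by omega)]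
  simp

theorem thresholdDepth_thresholdSize_le (k d : ℕ) :
    thresholdDepth k (thresholdSize k d) ≤ d := by
  fun_induction thresholdSize k d with
  | case1 => simp [thresholdDepth]
  | case2 d ih =>
    rw [add_comm, thresholdDepth]
    have := Nat.mul_div_le d (2 * k)
    have := Nat.mul_le_mul_left (2 * k) ih
    omega

theorem le_thresholdSize {k : ℕ} (hk : 1 ≤ k) (t : ℕ) :
    ∀ d, thresholdDepth k t ≤ d → t ≤ thresholdSize k d := by
  induction t with
  | zero => simp
  | succ t ih =>
    intro d hd
    rw [thresholdDepth] at hd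
    obtain ⟨d, rfl⟩ : ∃ e, d = e + 1 := ⟨d - 1, by omega⟩
    rw [thresholdSize]
    have := ih (d / (2 * k)) ((Nat.le_div_iff_mul_le (by omega)).2 (by linarith))
    omega

theorem mtdge_thresholdSize {k : ℕ} (hk : 1 ≤ k) (hY : Nat.card Y = k) {H : Set (X → Y)} {d : ℕ}
    (h : mLDge H d) : MTDge H (thresholdSize k d) := by
  have : Finite Y := Nat.finite_of_card_ne_zero (by omega)
  have hd := thresholdDepth_thresholdSize_le k d
  generalize thresholdSize k d = t at hd ⊢
  rcases t with _ | n
  · exact ⟨Fin.elim0, Fin.elim0, Fin.elim0, Fin.elim0, fun i => i.elim0, fun i => i.elim0,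
      fun i => i.elim0⟩
  · exact (wins_of_card hk hY n (fun _ => True) (fun _ => True) _ H (by simp)
      (h.shatters.of_le hd)).mtdge

end Assembly

/-- For classes with `k` labels: if the multiclass Littlestone dimension is infinite then
the multiclass threshold dimension is infinite. Quantitatively, there is `f = f_k` with
`f_k(1) = 1`, `f_k(d) ≥ 1 + f_k(⌈d/(2k)⌉ - 1)` and `f_k(d) → ∞`, such that `LD(H) ≥ d`
implies `MTD(H) ≥ f_k(d)`. -/
theorem mld_infinite_implies_mtd_infinite (k : ℕ) (hk : 1 ≤ k) :
    ∃ f : ℕ → ℕ, f 1 = 1 ∧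
      (∀ d : ℕ, 2 ≤ d → 1 + f ((d + 2 * k - 1) / (2 * k) - 1) ≤ f d) ∧
      Filter.Tendsto f Filter.atTop Filter.atTop ∧
      ∀ (X Y : Type*) (H : Set (X → Y)), Nat.card Y = k →
        (∀ d : ℕ, mLDge H d → MTDge H (f d)) ∧
        ((∀ d : ℕ, mLDge H d) → ∀ t : ℕ, MTDge H t) := by
  refine ⟨thresholdSize k, by simp [thresholdSize], fun d hd => ?_,
    Filter.tendsto_atTop.2 fun t => Filter.eventually_atTop.2 ⟨_, le_thresholdSize hk t⟩,
    fun X Y H hY => ⟨fun d h => mtdge_thresholdSize hk hY h, fun h t => ?_⟩⟩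
  · obtain ⟨d, rfl⟩ : ∃ e, d = e + 1 := ⟨d - 1, by omega⟩
    rw [ceil_div_sub_one hk, thresholdSize]
  · exact (mtdge_thresholdSize hk hY (h _)).of_le (le_thresholdSize hk t _ le_rfl)
end

section
/- Let H be a class of boolean functions on X. If TD(H) ≥ d (threshold dimension at least d), then LD(H) ≥ ⌊log₂ d⌋, and if LD(H) ≥ d then TD(H) ≥ ⌊log₂ d⌋. -/
/-- `H` shatters some Littlestone tree of depth `d`. -/
def LDge {X : Type*} (H : Set (X → Bool)) (d : ℕ) : Prop :=
  ∃ x : List Bool → X, ∀ σ : List Bool, σ.length = d →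
    ∃ h ∈ H, ∀ i : ℕ, ∀ hi : i < σ.length, h (x (σ.take i)) = σ.get ⟨i, hi⟩

/-- The Littlestone dimension of `H`, as an extended natural number. -/
noncomputable def Ldim {X : Type*} (H : Set (X → Bool)) : ℕ∞ :=
  sSup {e : ℕ∞ | ∃ d : ℕ, e = d ∧ LDge H d}

/-- The threshold dimension of `H` is at least `d`. -/
def TDge {X : Type*} (H : Set (X → Bool)) (d : ℕ) : Prop :=
  ∃ (x : Fin d → X) (h : Fin d → X → Bool),
    (∀ i, h i ∈ H) ∧ ∀ i j, h i (x j) = decide (j ≤ i)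

/-- The threshold dimension of `H`, as an extended natural number. -/
noncomputable def TDim {X : Type*} (H : Set (X → Bool)) : ℕ∞ :=
  sSup {e : ℕ∞ | ∃ d : ℕ, e = d ∧ TDge H d}

/-- `H` shatters a Littlestone tree of depth `n` whose nodes are labelled by points of `P`. -/
def ShattersTree {X : Type*} (P : Set X) : Set (X → Bool) → ℕ → Prop
  | H, 0 => H.Nonempty
  | H, n + 1 => ∃ x ∈ P, ∀ b, ShattersTree P {h ∈ H | h x = b} n

namespace ShattersTree

variable {X : Type*} {P : Set X}

theorem mono {n : ℕ} {H K : Set (X → Bool)} (hHK : H ⊆ K) (hH : ShattersTree P H n) :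
    ShattersTree P K n := by
  induction n generalizing H K with
  | zero => exact Set.Nonempty.mono hHK hH
  | succ n ih =>
    obtain ⟨x, hx, hb⟩ := hH
    exact ⟨x, hx, fun b => ih (fun h hh => ⟨hHK hh.1, hh.2⟩) (hb b)⟩

theorem nonempty {n : ℕ} {H : Set (X → Bool)} (hH : ShattersTree P H n) : H.Nonempty := by
  induction n generalizing H with
  | zero => exact hH
  | succ n ih =>
    obtain ⟨x, -, hb⟩ := hH
    exact (ih (hb true)).mono fun h hh => hh.1

/-- Ramsey property of trees: colouring the nodes by `c` yields a large monochromatic subtree. -/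
theorem exists_monochromatic (c : X → Bool) {n : ℕ} {H : Set (X → Bool)}
    (hH : ShattersTree P H n) (p : Bool → ℕ) (hp : p false + p true ≤ n + 1) :
    ∃ b, ShattersTree {x ∈ P | c x = b} H (p b) := by
  by_cases hzero : ∃ b, p b = 0
  · obtain ⟨b, hb⟩ := hzero
    exact ⟨b, by rw [hb]; exact hH.nonempty⟩
  push Not at hzero
  induction n generalizing H p with
  | zero =>
    have h0 := hzero false
    have h1 := hzero true
    omega
  | succ n ih =>
    obtain ⟨x, hx, hsub⟩ := hH
    obtain ⟨m, hm⟩ := Nat.exists_eq_succ_of_ne_zero (hzero (c x))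
    let q : Bool → ℕ := Function.update p (c x) m
    have hq : q false + q true ≤ n + 1 := by
      cases hc : c x <;> simp [q, hc] at hm ⊢ <;> omega
    have hq_self : q (c x) = m := Function.update_self ..
    have hq_ne {b : Bool} (hb : b ≠ c x) : q b = p b := Function.update_of_ne hb ..
    have key (a : Bool) : ∃ b, ShattersTree {y ∈ P | c y = b} {h ∈ H | h x = a} (q b) := by
      by_cases hz : ∃ b, q b = 0
      · obtain ⟨b, hb⟩ := hz
        exact ⟨b, by rw [hb]; exact (hsub a).nonempty⟩
      · push Not at hz
        exact ih (hsub a) q hq hz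
    by_cases hne : ∃ a b, b ≠ c x ∧ ShattersTree {y ∈ P | c y = b} {h ∈ H | h x = a} (q b)
    · obtain ⟨a, b, hb, hs⟩ := hne
      rw [hq_ne hb] at hs
      exact ⟨b, hs.mono fun h hh => hh.1⟩
    · push Not at hne
      refine ⟨c x, ?_⟩
      rw [hm]
      refine ⟨x, ⟨hx, rfl⟩, fun a => ?_⟩
      obtain ⟨b, hs⟩ := key a
      obtain rfl : b = c x := by
        by_contra hb
        exact hne a b hb hs
      rwa [hq_self] at hs

/-- A shattered tree of depth at least `2 ^ k - 1` contains `k` points and `k + 1` functions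
in threshold position. -/
theorem exists_thresholds (k : ℕ) {n : ℕ} {P : Set X} {H : Set (X → Bool)}
    (hH : ShattersTree P H n) (hk : 2 ^ k ≤ n + 1) :
    ∃ (x : Fin k → X) (h : Fin (k + 1) → X → Bool),
      (∀ j, x j ∈ P) ∧ (∀ i, h i ∈ H) ∧ ∀ i j, h i (x j) = decide (j.castSucc < i) := by
  induction k generalizing n P H with
  | zero =>
    obtain ⟨g, hg⟩ := hH.nonempty
    exact ⟨Fin.elim0, fun _ => g, fun j => j.elim0, fun _ => hg, fun _ j => j.elim0⟩
  | succ k ih =>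
    obtain ⟨g, hg⟩ := hH.nonempty
    obtain ⟨b, hb⟩ := hH.exists_monochromatic g (fun _ => 2 ^ k) (by rw [pow_succ] at hk; omega)
    obtain ⟨m, hm⟩ := Nat.exists_eq_succ_of_ne_zero (pow_ne_zero k (two_ne_zero (α := ℕ)))
    simp only [hm] at hb
    obtain ⟨y, ⟨hyP, hy⟩, hsub⟩ := hb
    obtain ⟨x, h, hx, hh, hxh⟩ := ih (hsub !b) hm.le
    cases b with
    | false =>
      refine ⟨Fin.cons y x, Fin.cons g h, ?_, ?_, ?_⟩
      · exact Fin.cases hyP fun j => (hx j).1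
      · exact Fin.cases hg fun i => (hh i).1
      · refine Fin.cases (Fin.cases ?_ fun j => ?_) fun i => Fin.cases ?_ fun j => ?_
        · simpa using hy
        · simpa using (hx j).2
        · simpa using (hh i).2
        · simpa [← Fin.succ_castSucc] using hxh i j
    | true =>
      refine ⟨Fin.snoc x y, Fin.snoc h g, ?_, ?_, ?_⟩
      · exact Fin.lastCases (by simpa using hyP) fun j => by simpa using (hx j).1
      · exact Fin.lastCases (by simpa using hg) fun i => by simpa using (hh i).1
      · refine Fin.lastCases (Fin.lastCases ?_ fun j => ?_) fun i => Fin.lastCases ?_ fun j => ?_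
        · simpa [Fin.castSucc_lt_last] using hy
        · simpa [Fin.castSucc_lt_last] using (hx j).2
        · simpa [(Fin.le_last i).not_gt] using (hh i).2
        · simpa using hxh i j

/-- Binary search: `2 ^ n` consecutive thresholds shatter a tree of depth `n`. -/
theorem of_thresholds (n a : ℕ) {H : Set (X → Bool)} {x : ℕ → X} {h : ℕ → X → Bool}
    (hH : ∀ i, a ≤ i → i < a + 2 ^ n → h i ∈ H)
    (hx : ∀ i j, i < a + 2 ^ n → j < a + 2 ^ n → h i (x j) = decide (j ≤ i)) :
    ShattersTree Set.univ H n := by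
  induction n generalizing a H with
  | zero => exact ⟨h a, hH a le_rfl (by simp)⟩
  | succ n ih =>
    have hpos : 0 < 2 ^ n := by positivity
    rw [pow_succ] at hH hx
    refine ⟨x (a + 2 ^ n), Set.mem_univ _, fun b => ?_⟩
    cases b with
    | false =>
      refine ih a (fun i hi hi' => ⟨hH i hi (by omega), ?_⟩)
        fun i j hi hj => hx i j (by omega) (by omega)
      rw [hx _ _ (by omega) (by omega)]
      simpa using hi'
    | true =>
      refine ih (a + 2 ^ n) (fun i hi hi' => ⟨hH i (by omega) (by omega), ?_⟩)
        fun i j hi hj => hx i j (by omega) (by omega)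
      rw [hx _ _ (by omega) (by omega)]
      simpa using hi

theorem to_LDge [Nonempty X] {n : ℕ} {H : Set (X → Bool)} (hH : ShattersTree P H n) :
    LDge H n := by
  induction n generalizing H with
  | zero =>
    obtain ⟨h, hh⟩ := hH
    exact ⟨fun _ => Classical.arbitrary X, fun σ hσ => ⟨h, hh, fun i hi => by omega⟩⟩
  | succ n ih =>
    obtain ⟨r, -, hsub⟩ := hH
    choose x hx using fun b => ih (hsub b)
    refine ⟨fun | [] => r | b :: l => x b l, ?_⟩
    rintro (_ | ⟨b, σ⟩) hσ
    · simp at hσ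
    · obtain ⟨h, ⟨hh, hr⟩, hi⟩ := hx b σ (by simpa using hσ)
      refine ⟨h, hh, ?_⟩
      rintro (_ | i) hlt
      · simpa using hr
      · simpa using hi i (by simpa using hlt)

end ShattersTree

theorem LDge.shattersTree {X : Type*} {n : ℕ} {H : Set (X → Bool)} (hH : LDge H n) :
    ShattersTree Set.univ H n := by
  induction n generalizing H with
  | zero =>
    obtain ⟨x, hx⟩ := hH
    obtain ⟨h, hh, -⟩ := hx [] rfl
    exact ⟨h, hh⟩
  | succ n ih =>
    obtain ⟨x, hx⟩ := hH
    refine ⟨x [], Set.mem_univ _, fun b => ih ⟨fun l => x (b :: l), fun σ hσ => ?_⟩⟩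
    obtain ⟨h, hh, hi⟩ := hx (b :: σ) (by simpa using hσ)
    exact ⟨h, ⟨hh, by simpa using hi 0 (by simp)⟩,
      fun i hlt => by simpa using hi (i + 1) (by simpa using hlt)⟩

theorem TDge.LDge_log {X : Type*} {d : ℕ} {H : Set (X → Bool)} (hH : TDge H d) (hd : d ≠ 0) :
    LDge H (Nat.log 2 d) := by
  obtain ⟨x, h, hh, hxh⟩ := hH
  have : NeZero d := ⟨hd⟩
  have : Nonempty X := ⟨x 0⟩
  have hlog : 2 ^ Nat.log 2 d ≤ d := Nat.pow_log_le_self 2 hd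
  refine (ShattersTree.of_thresholds (Nat.log 2 d) 0 (x := fun j => x (Fin.ofNat d j))
    (h := fun i => h (Fin.ofNat d i)) (fun i _ _ => hh _) fun i j hi hj => ?_).to_LDge
  rw [hxh]
  simp only [Fin.le_def, Fin.ofNat]
  rw [Nat.mod_eq_of_lt (by omega), Nat.mod_eq_of_lt (by omega)]

theorem LDge.TDge_log {X : Type*} {d : ℕ} {H : Set (X → Bool)} (hH : LDge H d) (hd : d ≠ 0) :
    TDge H (Nat.log 2 d) := by
  obtain ⟨x, h, -, hh, hxh⟩ := hH.shattersTree.exists_thresholds (Nat.log 2 d)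
    ((Nat.pow_log_le_self 2 hd).trans d.le_succ)
  refine ⟨x, fun i => h i.succ, fun i => hh _, fun i j => ?_⟩
  simp [hxh, Fin.castSucc_lt_succ_iff]

theorem ENat.exists_le_of_le_sSup_coe {p : ℕ → Prop} {d : ℕ} (hd : d ≠ 0)
    (h : (d : ℕ∞) ≤ sSup {e : ℕ∞ | ∃ n : ℕ, e = n ∧ p n}) : ∃ n, d ≤ n ∧ p n := by
  obtain ⟨m, rfl⟩ := Nat.exists_eq_succ_of_ne_zero hd
  have hlt : (m : ℕ∞) < sSup {e : ℕ∞ | ∃ n : ℕ, e = n ∧ p n} :=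
    lt_of_lt_of_le (by exact_mod_cast m.lt_succ_self) h
  obtain ⟨_, ⟨n, rfl, hn⟩, hmn⟩ := lt_sSup_iff.mp hlt
  exact ⟨n, by exact_mod_cast hmn, hn⟩

/-- If `p n` always gives `q (log₂ n)`, then the supremum of `q` is at least the logarithm
of the supremum of `p`. -/
theorem ENat.log_le_sSup_coe {p q : ℕ → Prop} (hpq : ∀ n, n ≠ 0 → p n → q (Nat.log 2 n)) {d : ℕ}
    (h : (d : ℕ∞) ≤ sSup {e : ℕ∞ | ∃ n : ℕ, e = n ∧ p n}) :
    (Nat.log 2 d : ℕ∞) ≤ sSup {e : ℕ∞ | ∃ n : ℕ, e = n ∧ q n} := by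
  rcases eq_or_ne d 0 with rfl | hd
  · simp
  obtain ⟨n, hdn, hn⟩ := ENat.exists_le_of_le_sSup_coe hd h
  exact le_sSup_of_le ⟨_, rfl, hpq n (by omega) hn⟩ (by exact_mod_cast Nat.log_mono_right hdn)


/-- If `TD(H) ≥ d` then `LD(H) ≥ ⌊log₂ d⌋`, and if `LD(H) ≥ d` then `TD(H) ≥ ⌊log₂ d⌋`. -/
theorem threshold_littlestone_relation {X : Type*} (H : Set (X → Bool)) (d : ℕ) :
    ((d : ℕ∞) ≤ TDim H → (Nat.log 2 d : ℕ∞) ≤ Ldim H) ∧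
    ((d : ℕ∞) ≤ Ldim H → (Nat.log 2 d : ℕ∞) ≤ TDim H) :=
  ⟨ENat.log_le_sSup_coe fun _ hn h => TDge.LDge_log h hn,
    ENat.log_le_sSup_coe fun _ hn h => LDge.TDge_log h hn⟩
end
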